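/- Let G be a tree (a connected acyclic simple graph) with vertex set V and graph metric d, let v ∈ V, and let r ≥ 1, 1 ≤ d₀ ≤ r, and k be integers with either k ≥ 2, or k = 1 and 2·d₀ ≥ r. On the annulus B_k = {x ∈ V : (k−1)·r + d₀ ≤ d(v,x) ≤ k·r + d₀}, define x ∼ y if and only if the median m of the triple x, y, v satisfies 2·d(v,m) ≥ (2k−3)·r + 2·d₀. Then ∼ is an equivalence relation on B_k, every equivalence class of ∼ has diameter ≤ 3r, and any two distinct equivalence classes of ∼ are at distance ≥ r from each other. -/

import Mathlib

/-- `m` is the median (center of the tripod) of the vertices `x`, `y`, `v` in the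
graph `G`, with respect to the graph metric. -/
def IsTreeMedian {V : Type*} (G : SimpleGraph V) (x y v m : V) : Prop :=
  G.dist x y = G.dist x m + G.dist m y ∧
  G.dist x v = G.dist x m + G.dist m v ∧
  G.dist y v = G.dist y m + G.dist m v

theorem geo_path {V : Type*} {G : SimpleGraph V} (hG : G.IsTree) (a b : V) :
    ∃ p : G.Walk a b, p.IsPath ∧ p.length = G.dist a b :=
  hG.connected.exists_path_of_dist a b

theorem path_len {V : Type*} {G : SimpleGraph V} (hG : G.IsTree) {a b : V}
    (p : G.Walk a b) (hp : p.IsPath) : p.length = G.dist a b := by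
  obtain ⟨q, hq, hl⟩ := geo_path hG a b
  have := hG.isAcyclic.path_unique ⟨p, hp⟩ ⟨q, hq⟩
  rw [← hl]
  exact congrArg (fun t : G.Path a b => t.1.length) this

theorem mem_geo {V : Type*} {G : SimpleGraph V} (hG : G.IsTree) {a b w : V}
    (p : G.Walk a b) (hp : p.length = G.dist a b) (hw : w ∈ p.support) :
    G.dist a b = G.dist a w + G.dist w b := by
  classical
  have h1 := p.take_spec hw
  have h2 : (p.takeUntil w hw).length + (p.dropUntil w hw).length = p.length := by
    rw [← SimpleGraph.Walk.length_append, h1]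
  have h3 := SimpleGraph.dist_le (p.takeUntil w hw)
  have h4 := SimpleGraph.dist_le (p.dropUntil w hw)
  have h5 := hG.connected.dist_triangle (u := a) (v := w) (w := b)
  omega

theorem edge_sep {V : Type*} {G : SimpleGraph V} (hG : G.IsTree) {y a b v : V}
    (hab : G.Adj a b) (h1 : G.dist y b = G.dist y a + 1) (h2 : G.dist a v = G.dist b v + 1) :
    G.dist y v = G.dist y a + 1 + G.dist b v := by
  obtain ⟨p, hp, hpl⟩ := geo_path hG y a
  obtain ⟨q, hq, hql⟩ := geo_path hG b v
  have hpath : (p.append (SimpleGraph.Walk.cons hab q)).IsPath := by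
    rw [SimpleGraph.Walk.isPath_def, SimpleGraph.Walk.support_append,
      SimpleGraph.Walk.support_cons, List.tail_cons, List.nodup_append]
    refine ⟨hp.support_nodup, hq.support_nodup, ?_⟩
    rintro w hw w' hw' rfl
    have e1 := mem_geo hG p hpl hw
    have e2 := mem_geo hG q hql hw'
    have t1 := hG.connected.dist_triangle (u := y) (v := w) (w := b)
    have t2 := hG.connected.dist_triangle (u := a) (v := w) (w := v)
    rw [G.dist_comm (u := b) (v := w)] at e2
    rw [G.dist_comm (u := a) (v := w)] at t2
    omega
  have := path_len hG _ hpath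
  simp only [SimpleGraph.Walk.length_append, SimpleGraph.Walk.length_cons] at this
  omega

theorem median_exists {V : Type*} {G : SimpleGraph V} (hG : G.IsTree) (v y : V) :
    ∀ (n : ℕ) (x : V), G.dist x y = n → ∃ m, IsTreeMedian G x y v m := by
  intro n
  induction n with
  | zero =>
    intro x hx
    have : x = y := (hG.connected.dist_eq_zero_iff).1 hx
    subst this
    exact ⟨x, by simp [IsTreeMedian]⟩
  | succ n ih =>
    intro x hx
    obtain ⟨p, hp, hpl⟩ := geo_path hG x y
    cases p with
    | nil => simp at hx
    | @cons _ x' _ hadj q =>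
      rw [SimpleGraph.Walk.length_cons] at hpl
      have hq := path_len hG q hp.of_cons
      obtain ⟨m, hm1, hm2, hm3⟩ := ih x' (by omega)
      have hne := hG.dist_ne_of_adj v hadj
      have e1 : G.dist x x' = 1 := SimpleGraph.dist_eq_one_iff_adj.2 hadj
      have t1 := hG.connected.dist_triangle (u := x) (v := x') (w := v)
      have t2 := hG.connected.dist_triangle (u := x') (v := x) (w := v)
      rw [G.dist_comm (u := x') (v := x)] at t2
      rw [G.dist_comm (u := v) (v := x), G.dist_comm (u := v) (v := x')] at hne
      rcases lt_or_gt_of_ne hne with h | h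
      · have := edge_sep hG (y := y) (v := v) hadj.symm
          (by rw [G.dist_comm (u := y) (v := x), G.dist_comm (u := y) (v := x')]; omega) (by omega)
        refine ⟨x, by simp, by simp, ?_⟩
        rw [G.dist_comm (u := y) (v := x')] at this
        rw [G.dist_comm (u := y) (v := x)]
        omega
      · have t3 := hG.connected.dist_triangle (u := x) (v := x') (w := m)
        have t4 := hG.connected.dist_triangle (u := x) (v := m) (w := v)
        refine ⟨m, ?_, ?_, hm3⟩ <;> omega

theorem between {V : Type*} {G : SimpleGraph V} (hG : G.IsTree) {v y m n : V}
    (hm : G.dist v y = G.dist v m + G.dist m y) (hn : G.dist v y = G.dist v n + G.dist n y)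
    (hle : G.dist v m ≤ G.dist v n) : G.dist v n = G.dist v m + G.dist m n := by
  obtain ⟨p, hp, hpl⟩ := geo_path hG v m
  obtain ⟨q, hq, hql⟩ := geo_path hG m y
  obtain ⟨p', hp', hpl'⟩ := geo_path hG v n
  obtain ⟨q', hq', hql'⟩ := geo_path hG n y
  have h1 : (p.append q).IsPath := SimpleGraph.Walk.isPath_of_length_eq_dist _
    (by rw [SimpleGraph.Walk.length_append]; omega)
  have h2 : (p'.append q').IsPath := SimpleGraph.Walk.isPath_of_length_eq_dist _
    (by rw [SimpleGraph.Walk.length_append]; omega)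
  have he : p.append q = p'.append q' :=
    congrArg Subtype.val (hG.isAcyclic.path_unique ⟨_, h1⟩ ⟨_, h2⟩)
  have hmem : n ∈ (p.append q).support := by
    rw [he, SimpleGraph.Walk.mem_support_append_iff]
    exact Or.inl p'.end_mem_support
  rw [SimpleGraph.Walk.mem_support_append_iff] at hmem
  rcases hmem with h | h
  · have := mem_geo hG p hpl h
    rw [G.dist_comm (u := n) (v := m)] at this
    omega
  · have := mem_geo hG q hql h
    omega

/-- The Gromov product of any two points is computed by a median. -/
theorem median_dist {V : Type*} {G : SimpleGraph V} {x y v m : V} (h : IsTreeMedian G x y v m) :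
    G.dist v x + G.dist v y = G.dist x y + 2 * G.dist v m := by
  obtain ⟨h1, h2, h3⟩ := h
  rw [G.dist_comm (u := v) (v := x), G.dist_comm (u := v) (v := y),
    G.dist_comm (u := v) (v := m)]
  rw [G.dist_comm (u := y) (v := m)] at h3
  omega

theorem median_symm {V : Type*} {G : SimpleGraph V} {x y v m : V} (h : IsTreeMedian G x y v m) :
    IsTreeMedian G y x v m := by
  obtain ⟨h1, h2, h3⟩ := h
  refine ⟨?_, h3, h2⟩
  rw [G.dist_comm (u := y) (v := x), G.dist_comm (u := y) (v := m),
    G.dist_comm (u := m) (v := x)]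
  omega

theorem four_aux {V : Type*} {G : SimpleGraph V} (hG : G.IsTree) {x y z v m n : V}
    (hm : IsTreeMedian G x y v m) (hn : IsTreeMedian G y z v n)
    (hle : G.dist v m ≤ G.dist v n) :
    G.dist x z + 2 * G.dist v m ≤ G.dist v x + G.dist v z := by
  obtain ⟨h1, h2, h3⟩ := hm
  obtain ⟨k1, k2, k3⟩ := hn
  have := between hG (v := v) (y := y) (m := m) (n := n)
    (by rw [G.dist_comm (u := v) (v := y), G.dist_comm (u := v) (v := m),
          G.dist_comm (u := m) (v := y)]; omega)
    (by rw [G.dist_comm (u := v) (v := y), G.dist_comm (u := v) (v := n),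
          G.dist_comm (u := n) (v := y)]; omega) hle
  have t1 := hG.connected.dist_triangle (u := x) (v := m) (w := z)
  have t2 := hG.connected.dist_triangle (u := m) (v := n) (w := z)
  rw [G.dist_comm (u := v) (v := x), G.dist_comm (u := v) (v := z)]
  rw [G.dist_comm (u := m) (v := v)] at h2
  rw [G.dist_comm (u := n) (v := v), G.dist_comm (u := z) (v := n)] at k3
  omega

/-- On the annulus `B_k = {x : (k−1)·r + d₀ ≤ d(v,x) ≤ k·r + d₀}` of a tree, with
either `k ≥ 2`, or `k = 1` and `2·d₀ ≥ r`, the relation `x ∼ y` iff the median `m` of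
`x, y, v` satisfies `2·d(v,m) ≥ (2k−3)·r + 2·d₀` is an equivalence relation whose
classes have diameter ≤ 3r, with distinct classes at distance ≥ r. -/
theorem stmt_4 {V : Type*} (G : SimpleGraph V) (hG : G.IsTree) (v : V)
    (r d₀ k : ℕ) (hr : 1 ≤ r) (hd₁ : 1 ≤ d₀) (hd₂ : d₀ ≤ r)
    (hk : 2 ≤ k ∨ (k = 1 ∧ r ≤ 2 * d₀)) :
    let B : Set V := {x | ((k : ℤ) - 1) * r + d₀ ≤ (G.dist v x : ℤ) ∧
      (G.dist v x : ℤ) ≤ k * r + d₀}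
    let rel : V → V → Prop := fun x y =>
      ∃ m : V, IsTreeMedian G x y v m ∧
        (2 * (k : ℤ) - 3) * r + 2 * d₀ ≤ 2 * (G.dist v m : ℤ)
    let cls : V → Set V := fun x => {y ∈ B | rel x y}
    -- ∼ is an equivalence relation on B_k
    (∀ x ∈ B, rel x x) ∧
    (∀ x ∈ B, ∀ y ∈ B, rel x y → rel y x) ∧
    (∀ x ∈ B, ∀ y ∈ B, ∀ z ∈ B, rel x y → rel y z → rel x z) ∧
    -- every equivalence class has diameter ≤ 3r
    (∀ x ∈ B, ∀ y ∈ cls x, ∀ z ∈ cls x, G.dist y z ≤ 3 * r) ∧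
    -- distinct equivalence classes are at distance ≥ r
    (∀ x ∈ B, ∀ x' ∈ B, cls x ≠ cls x' →
      ∀ y ∈ cls x, ∀ z ∈ cls x', r ≤ G.dist y z) := by
  intro B rel cls
  have hrel : ∀ x y, rel x y ↔ (2 * (k : ℤ) - 3) * r + 2 * d₀ + G.dist x y ≤
      G.dist v x + G.dist v y := by
    intro x y
    constructor
    · rintro ⟨m, hm, h⟩
      have := median_dist hm
      omega
    · intro h
      obtain ⟨m, hm⟩ := median_exists hG v y _ x rfl
      have := median_dist hm
      exact ⟨m, hm, by omega⟩
  have hrefl : ∀ x ∈ B, rel x x := by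
    rintro x ⟨hx, -⟩
    refine (hrel x x).2 ?_
    rw [SimpleGraph.dist_self]
    push_cast
    nlinarith
  have hsymm : ∀ x y, rel x y → rel y x := by
    rintro x y ⟨m, hm, h⟩
    exact ⟨m, median_symm hm, h⟩
  have htrans : ∀ x y z, rel x y → rel y z → rel x z := by
    rintro x y z ⟨m, hm, h⟩ ⟨n, hn, h'⟩
    refine (hrel x z).2 ?_
    rcases le_total (G.dist v m) (G.dist v n) with hle | hle
    · have := four_aux hG hm hn hle
      omega
    · have := four_aux hG (median_symm hn) (median_symm hm) hle
      rw [G.dist_comm (u := z) (v := x)] at this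
      omega
  refine ⟨hrefl, fun x _ y _ => hsymm x y, fun x _ y _ z _ => htrans x y z, ?_, ?_⟩
  · rintro x hx y ⟨⟨_, hy⟩, hxy⟩ z ⟨⟨_, hz⟩, hxz⟩
    have := (hrel y z).1 (htrans _ _ _ (hsymm _ _ hxy) hxz)
    zify
    nlinarith
  · rintro x hx x' hx' hne y ⟨⟨hy, _⟩, hxy⟩ z ⟨⟨hz, _⟩, hxz⟩
    by_contra hlt
    apply hne
    have hyz : rel y z := by
      refine (hrel y z).2 ?_
      push Not at hlt
      zify at hlt
      nlinarith
    have hxx : rel x x' := htrans _ _ _ hxy (htrans _ _ _ hyz (hsymm _ _ hxz))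
    ext w
    exact ⟨fun h => ⟨h.1, htrans _ _ _ (hsymm _ _ hxx) h.2⟩,
      fun h => ⟨h.1, htrans _ _ _ hxx h.2⟩⟩
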